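/- Prescribed-performance satisfaction lemma. Let h : ℝ^p → ℝ, y : [0,∞) → ℝ^p, 0 ≤ a ≤ b, and choose t* (with t* = a for the always type, t* ∈ [a,b] for the eventually type), ρ^max ∈ ℝ, r ∈ ℝ with r < ρ^max and h(y(0)) > r if t* = 0, γ⁰ ∈ (ρ^max − h(y(0)), ∞) if t* > 0 and γ⁰ ∈ (ρ^max − h(y(0)), ρ^max − r] if t* = 0, γ^∞ ∈ (0, min(γ⁰, ρ^max − r)], and l ≥ 0 arbitrary if −γ⁰ + ρ^max ≥ r, while l = −ln((r + γ^∞ − ρ^max)/(−(γ⁰ − γ^∞)))/t* if −γ⁰ + ρ^max < r (assuming in that case γ^∞ < ρ^max − r and γ⁰ > γ^∞). Set γ(t) = (γ⁰ − γ^∞)·exp(−l·t) + γ^∞. If the funnel inequality −γ(t) + ρ^max < h(y(t)) < ρ^max holds for all t ≥ 0, then r ≤ inf_{t∈[a,b]} h(y(t)) ≤ ρ^max in the always case and r ≤ sup_{t∈[a,b]} h(y(t)) ≤ ρ^max in the eventually case; in particular, if r > 0 the corresponding temporal task is satisfied. -/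

import Mathlib

/-! The decay rate `l` is nonnegative, so `γ` is nonincreasing, and it is chosen so that
`γ(t*) ≤ ρmax − r`, with equality when the funnel starts wider than `ρmax − r`.
Hence `γ(t) ≤ ρmax − r` for all `t ≥ t*` (`perf_le_of_tstar_le`), and the lower funnel
inequality gives `r < h (y t)` there. In the always case this holds on all of `[a, b]` and bounds
the infimum; in the eventually case the single instant `t* ∈ [a, b]` bounds the supremum. -/

/-- The performance function `γ(t) = (γ⁰ − γ^∞)·exp(−l·t) + γ^∞`. -/
noncomputable def perf (γ0 γinf l t : ℝ) : ℝ := (γ0 - γinf) * Real.exp (-l * t) + γinf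

/-- From time `t*` on, the funnel is no wider than `ρmax − r`. The hypothesis `hγ0` records that
for `t* = 0` the initial width already satisfies this bound, which makes the division by `t*` in
the formula for `l` a genuine one. -/
lemma perf_le_of_tstar_le {tstar ρmax r γ0 γinf l t : ℝ} (h0 : 0 ≤ tstar) (ht : tstar ≤ t)
    (hγ0 : tstar = 0 → γ0 ≤ ρmax - r) (hγinf : γinf ≤ γ0)
    (hl : if r ≤ -γ0 + ρmax then 0 ≤ l
      else γinf < ρmax - r ∧ γinf < γ0 ∧
        l = -Real.log ((r + γinf - ρmax) / (-(γ0 - γinf))) / tstar) :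
    perf γ0 γinf l t ≤ ρmax - r := by
  unfold perf
  split_ifs at hl with hc
  · have he : Real.exp (-l * t) ≤ 1 := by
      rw [Real.exp_le_one_iff]
      nlinarith [mul_nonneg hl (h0.trans ht)]
    nlinarith [mul_le_mul_of_nonneg_left he (sub_nonneg.2 hγinf)]
  · obtain ⟨h1, h2, hl⟩ := hl
    have hpos : 0 < tstar := h0.lt_of_ne fun h => hc (by linarith [hγ0 h.symm])
    have hd : 0 < γ0 - γinf := sub_pos.2 h2
    have hq : (r + γinf - ρmax) / (-(γ0 - γinf)) = (ρmax - r - γinf) / (γ0 - γinf) := by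
      rw [div_neg, ← neg_div]
      congr 1
      ring
    rw [hq] at hl
    have hq0 : 0 < (ρmax - r - γinf) / (γ0 - γinf) := div_pos (by linarith) hd
    have hq1 : (ρmax - r - γinf) / (γ0 - γinf) ≤ 1 := (div_le_one hd).2 (by linarith)
    have hl0 : 0 ≤ l := by
      rw [hl]
      exact div_nonneg (neg_nonneg.2 (Real.log_nonpos hq0.le hq1)) h0
    have hlt : -l * tstar = Real.log ((ρmax - r - γinf) / (γ0 - γinf)) := by
      rw [hl]
      field_simp
    have he : Real.exp (-l * t) ≤ (ρmax - r - γinf) / (γ0 - γinf) := by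
      rw [← Real.exp_log hq0, ← hlt]
      exact Real.exp_le_exp.2 (by nlinarith [mul_le_mul_of_nonneg_left ht hl0])
    rw [le_div_iff₀ hd] at he
    linarith

/-- prescribed-performance satisfaction lemma: with the parameter choice
(8)–(13) for `t*, ρ^max, r, γ⁰, γ^∞, l`, if the funnel inequality
`−γ(t) + ρ^max < h(y(t)) < ρ^max` holds for all `t ≥ 0`, then
`r ≤ inf_{t∈[a,b]} h(y(t)) ≤ ρ^max` in the always case (`t* = a`) and
`r ≤ sup_{t∈[a,b]} h(y(t)) ≤ ρ^max` in the eventually case (`t* ∈ [a,b]`);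
in particular a positive `r` yields a positive robustness value. -/
theorem prescribed_performance_satisfaction (p : ℕ) (h : (Fin p → ℝ) → ℝ)
    (y : ℝ → Fin p → ℝ) (a b tstar ρmax r γ0 γinf l : ℝ)
    (ha : 0 ≤ a) (hab : a ≤ b)
    (hrρ : r < ρmax)
    (hr0 : tstar = 0 → r < h (y 0))
    (hγ0 : if 0 < tstar then γ0 ∈ Set.Ioi (ρmax - h (y 0))
      else γ0 ∈ Set.Ioc (ρmax - h (y 0)) (ρmax - r))
    (hγinf : γinf ∈ Set.Ioc 0 (min γ0 (ρmax - r)))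
    (hl : if r ≤ -γ0 + ρmax then 0 ≤ l
      else γinf < ρmax - r ∧ γinf < γ0 ∧
        l = -Real.log ((r + γinf - ρmax) / (-(γ0 - γinf))) / tstar)
    (hfunnel : ∀ t ≥ (0 : ℝ),
      -perf γ0 γinf l t + ρmax < h (y t) ∧ h (y t) < ρmax) :
    (tstar = a →
      r ≤ sInf ((fun t => h (y t)) '' Set.Icc a b) ∧
      sInf ((fun t => h (y t)) '' Set.Icc a b) ≤ ρmax) ∧
    (tstar ∈ Set.Icc a b →
      r ≤ sSup ((fun t => h (y t)) '' Set.Icc a b) ∧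
      sSup ((fun t => h (y t)) '' Set.Icc a b) ≤ ρmax) ∧
    (0 < r →
      (tstar = a → 0 < sInf ((fun t => h (y t)) '' Set.Icc a b)) ∧
      (tstar ∈ Set.Icc a b → 0 < sSup ((fun t => h (y t)) '' Set.Icc a b))) := by
  have key : 0 ≤ tstar → ∀ t, tstar ≤ t → r ≤ h (y t) := by
    intro h0 t ht
    have hw : tstar = 0 → γ0 ≤ ρmax - r := by
      intro hz
      rw [if_neg (by simp [hz])] at hγ0
      exact hγ0.2
    have := perf_le_of_tstar_le h0 ht hw (hγinf.2.trans (min_le_left _ _)) hl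
    linarith [(hfunnel t (h0.trans ht)).1]
  have hub : ∀ x ∈ (fun t => h (y t)) '' Set.Icc a b, x ≤ ρmax := by
    rintro _ ⟨t, ht, rfl⟩
    exact (hfunnel t (ha.trans ht.1)).2.le
  have hne : ((fun t => h (y t)) '' Set.Icc a b).Nonempty := (Set.nonempty_Icc.2 hab).image _
  have hlb : tstar = a → ∀ x ∈ (fun t => h (y t)) '' Set.Icc a b, r ≤ x := by
    rintro hta _ ⟨t, ht, rfl⟩
    exact key (hta ▸ ha) t (hta ▸ ht.1)
  have hinf : tstar = a → r ≤ sInf ((fun t => h (y t)) '' Set.Icc a b) :=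
    fun hta => le_csInf hne (hlb hta)
  have hsup : tstar ∈ Set.Icc a b → r ≤ sSup ((fun t => h (y t)) '' Set.Icc a b) :=
    fun hts => (key (ha.trans hts.1) tstar le_rfl).trans
      (le_csSup ⟨ρmax, hub⟩ ⟨tstar, hts, rfl⟩)
  refine ⟨fun hta => ⟨hinf hta, ?_⟩, fun hts => ⟨hsup hts, csSup_le hne hub⟩,
    fun hr => ⟨fun hta => hr.trans_le (hinf hta), fun hts => hr.trans_le (hsup hts)⟩⟩
  obtain ⟨x, hx⟩ := hne
  exact (csInf_le ⟨r, hlb hta⟩ hx).trans (hub x hx)
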